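/- arXiv:2408.11256 — 4 statements merged into one kernel-verified Lean document; each statement's English description precedes it below -/
import Mathlib

section
/- Let K > 1 and let c ∈ ℝ satisfy 1/(2K) − 1/4 < c < 1/(4K²). Then the set {z ∈ ℂ : H_{K,0,c}(z) = z} of fixed points of H_{K,0,c} has exactly four elements. -/
/-!
The imaginary part of the fixed-point equation for real `c` reads `y * (2 * K * x - 1) = 0`.
On the line `y = 0` the real part becomes `K² x² - x + c = 0`, whose discriminant `1 - 4 K² c` is
positive by the upper bound on `c`; on the line `x = 1 / (2K)` it becomes
`y² = c + 1/4 - 1/(2K)`, which is positive by the lower bound. Each line thus carries two fixed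
points, and the second pair is off the real axis, so that the four points are distinct.
-/

open Filter

/-- The map `H_{K,0,c}(x+iy) = (K²x² − y² + Re c) + i(2Kxy + Im c)`. -/
noncomputable def Hzero (K : ℝ) (c : ℂ) (z : ℂ) : ℂ :=
  Complex.ofReal (K ^ 2 * z.re ^ 2 - z.im ^ 2 + c.re) +
    Complex.ofReal (2 * K * z.re * z.im + c.im) * Complex.I

theorem Hzero_ofReal_eq_self_iff (K c : ℝ) (z : ℂ) :
    Hzero K (c : ℂ) z = z ↔
      K ^ 2 * z.re ^ 2 - z.im ^ 2 + c = z.re ∧ 2 * K * z.re * z.im = z.im := by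
  simp [Hzero, Complex.ext_iff, -Complex.ofReal_add, -Complex.ofReal_sub, -Complex.ofReal_mul,
    -Complex.ofReal_pow]

/-- The fixed points, in terms of square roots `s` of the discriminant on the real axis and `t` of
`y²` on the line `x = 1 / (2K)`. -/
theorem fixedPoints_eq {K c s t : ℝ} (hK : K ≠ 0) (hs : s ^ 2 = 1 - 4 * K ^ 2 * c)
    (ht : t ^ 2 = c + 1 / 4 - 1 / (2 * K)) :
    {z : ℂ | Hzero K (c : ℂ) z = z} =
      {⟨(1 + s) / (2 * K ^ 2), 0⟩, ⟨(1 - s) / (2 * K ^ 2), 0⟩,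
        ⟨1 / (2 * K), t⟩, ⟨1 / (2 * K), -t⟩} := by
  ext ⟨x, y⟩
  simp only [Set.mem_ofPred_eq, Hzero_ofReal_eq_self_iff, Set.mem_insert_iff,
    Set.mem_singleton_iff, Complex.mk.injEq]
  have hc : c = (1 - s ^ 2) / (4 * K ^ 2) := by
    rw [hs]; field_simp; ring
  constructor
  · rintro ⟨h₁, h₂⟩
    by_cases hy : y = 0
    · subst hy
      have h : (2 * K ^ 2 * x - 1 - s) * (2 * K ^ 2 * x - 1 + s) = 0 := by
        linear_combination 4 * K ^ 2 * h₁ - hs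
      rcases mul_eq_zero.1 h with h | h
      · left
        refine ⟨?_, rfl⟩
        field_simp
        linarith
      · right; left
        refine ⟨?_, rfl⟩
        field_simp
        linarith
    · have hx : x = 1 / (2 * K) := by
        have := mul_right_cancel₀ hy (h₂.trans (one_mul y).symm)
        field_simp
        linarith
      have hKx : K ^ 2 * x ^ 2 = 1 / 4 := by
        rw [hx]; field_simp; norm_num
      have h : y ^ 2 = t ^ 2 := by
        rw [ht, ← hx]; linarith
      rcases sq_eq_sq_iff_eq_or_eq_neg.1 h with h | h
      · exact Or.inr (Or.inr (Or.inl ⟨hx, h⟩))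
      · exact Or.inr (Or.inr (Or.inr ⟨hx, h⟩))
  · have hKx : K ^ 2 * (1 / (2 * K)) ^ 2 = 1 / 4 := by
      field_simp; norm_num
    have hKx' : 2 * K * (1 / (2 * K)) = 1 := by field_simp
    rintro (⟨rfl, rfl⟩ | ⟨rfl, rfl⟩ | ⟨rfl, rfl⟩ | ⟨rfl, rfl⟩)
    · refine ⟨?_, by simp⟩
      rw [hc]; field_simp; ring
    · refine ⟨?_, by simp⟩
      rw [hc]; field_simp; ring
    · exact ⟨by linarith, by rw [hKx', one_mul]⟩
    · exact ⟨by rw [neg_sq]; linarith, by rw [hKx', one_mul]⟩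

theorem four_fixed_points (K c : ℝ) (hK : 1 < K)
    (hc₁ : 1 / (2 * K) - 1 / 4 < c) (hc₂ : c < 1 / (4 * K ^ 2)) :
    Set.ncard {z : ℂ | Hzero K (c : ℂ) z = z} = 4 := by
  have hK0 : 0 < K := by linarith
  have hD : 0 < 1 - 4 * K ^ 2 * c := by
    rw [lt_div_iff₀ (by positivity)] at hc₂
    linarith
  have hE : 0 < c + 1 / 4 - 1 / (2 * K) := by linarith
  have hs := Real.sqrt_pos.2 hD
  have ht := Real.sqrt_pos.2 hE
  rw [fixedPoints_eq hK0.ne' (Real.sq_sqrt hD.le) (Real.sq_sqrt hE.le)]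
  generalize √(1 - 4 * K ^ 2 * c) = s at hs
  generalize √(c + 1 / 4 - 1 / (2 * K)) = t at ht
  have hne : (1 + s) / (2 * K ^ 2) ≠ (1 - s) / (2 * K ^ 2) := by
    have : (1 - s) / (2 * K ^ 2) < (1 + s) / (2 * K ^ 2) := by gcongr; linarith
    exact this.ne'
  have htt : t ≠ -t := (show -t < t by linarith).ne'
  rw [Set.ncard_insert_of_notMem, Set.ncard_insert_of_notMem, Set.ncard_pair]
  · simpa only [ne_eq, Complex.mk.injEq, true_and] using htt
  · simp [ht.ne, ht.ne']
  · simp only [Set.mem_insert_iff, Set.mem_singleton_iff, Complex.mk.injEq, not_or, not_and]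
    exact ⟨fun h => (hne h).elim, fun _ => ht.ne, fun _ => (neg_lt_zero.2 ht).ne'⟩
end

section
/- Let K > 1 and let c ∈ ℝ satisfy c < 1/(2K) − 1/4 or c > 1/(4K²). Then the set {z ∈ ℂ : H_{K,0,c}(z) = z} of fixed points of H_{K,0,c} has exactly two elements. -/
/-!
A point `x + iy` is fixed exactly when `K²x² - y² + c = x` and `2Kxy = y`. The second equation
splits the fixed points into two families:

* `y = 0`, with `x` a root of `K²x² - x + c`, whose discriminant is `1 - 4K²c`;
* `y ≠ 0`, with `x = 1/(2K)` and `y² = c + 1/4 - 1/(2K)`.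

The first family has two elements if `c < 1/(4K²)` and none if `c > 1/(4K²)`; the second has two
if `c > 1/(2K) - 1/4` and none if `c ≤ 1/(2K) - 1/4`. Since
`1/(4K²) - (1/(2K) - 1/4) = (1/(2K) - 1/2)² ≥ 0`, each of the two ranges of `c` makes exactly one
family non-empty.
-/

open Filter

lemma Hzero_eq_self_iff (K c x y : ℝ) :
    Hzero K (c : ℂ) ⟨x, y⟩ = ⟨x, y⟩ ↔
      K ^ 2 * x ^ 2 - y ^ 2 + c = x ∧ 2 * K * x * y = y := by
  rw [Complex.ext_iff]
  simp only [Hzero, Complex.add_re, Complex.add_im, Complex.re_ofReal_mul, Complex.im_ofReal_mul,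
    Complex.ofReal_re, Complex.ofReal_im, Complex.I_re, Complex.I_im, mul_zero, mul_one,
    add_zero, zero_add]

theorem two_fixed_points (K c : ℝ) (hK : 1 < K)
    (hc : c < 1 / (2 * K) - 1 / 4 ∨ 1 / (4 * K ^ 2) < c) :
    Set.ncard {z : ℂ | Hzero K (c : ℂ) z = z} = 2 := by
  rw [Set.ncard_eq_two]
  have hK0 : 0 < K := by linarith
  have hK' : K ≠ 0 := hK0.ne'
  rcases hc with hc | hc
  · have hD : 0 < 1 - 4 * K ^ 2 * c := by
      have h1 : 4 * K ^ 2 * c < 4 * K ^ 2 * (1 / (2 * K) - 1 / 4) := by gcongr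
      have h2 : 4 * K ^ 2 * (1 / (2 * K) - 1 / 4) = 2 * K - K ^ 2 := by field_simp; ring
      nlinarith [sq_nonneg (K - 1)]
    obtain ⟨s, hs, hs2⟩ : ∃ s : ℝ, 0 < s ∧ s ^ 2 = 1 - 4 * K ^ 2 * c :=
      ⟨√(1 - 4 * K ^ 2 * c), Real.sqrt_pos.2 hD, Real.sq_sqrt hD.le⟩
    refine ⟨⟨(1 + s) / (2 * K ^ 2), 0⟩, ⟨(1 - s) / (2 * K ^ 2), 0⟩, ?_, ?_⟩
    · intro h
      have h1 : (1 + s) / (2 * K ^ 2) = (1 - s) / (2 * K ^ 2) := congrArg Complex.re h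
      field_simp at h1
      linarith
    · ext ⟨x, y⟩
      simp only [Set.mem_ofPred_eq, Hzero_eq_self_iff, Set.mem_insert_iff, Set.mem_singleton_iff,
        Complex.mk.injEq]
      -- The real fixed points are the roots of `K²x² - x + c`, whose discriminant is `s²`.
      have key : K ^ 2 * x ^ 2 + c = x ↔
          x = (1 + s) / (2 * K ^ 2) ∨ x = (1 - s) / (2 * K ^ 2) := by
        rw [eq_div_iff (by positivity), eq_div_iff (by positivity)]
        have hfac : (x * (2 * K ^ 2) - (1 + s)) * (x * (2 * K ^ 2) - (1 - s)) =
            4 * K ^ 2 * (K ^ 2 * x ^ 2 + c - x) := by linear_combination -hs2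
        rw [← sub_eq_zero, ← sub_eq_zero (b := 1 + s), ← sub_eq_zero (b := 1 - s),
          ← mul_eq_zero, hfac]
        simp [hK']
      constructor
      · rintro ⟨h1, h2⟩
        have hy : y = 0 := by
          by_contra hy
          have hx : x = 1 / (2 * K) := by
            rw [eq_div_iff (by positivity)]
            exact mul_right_cancel₀ hy (by linear_combination h2)
          have h3 : K ^ 2 * x ^ 2 = 1 / 4 := by rw [hx]; field_simp; norm_num
          nlinarith [sq_nonneg y]
        subst hy
        have := key.1 (by linarith)
        tauto
      · intro h
        have hy : y = 0 := by tauto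
        have := key.2 (by tauto)
        subst hy
        exact ⟨by linarith, by ring⟩
  · have hD : 0 < c + 1 / 4 - 1 / (2 * K) := by
      have h2 : 1 / (4 * K ^ 2) + 1 / 4 - 1 / (2 * K) = (1 / (2 * K) - 1 / 2) ^ 2 := by
        field_simp; ring
      nlinarith [sq_nonneg (1 / (2 * K) - 1 / 2)]
    obtain ⟨s, hs, hs2⟩ : ∃ s : ℝ, 0 < s ∧ s ^ 2 = c + 1 / 4 - 1 / (2 * K) :=
      ⟨√(c + 1 / 4 - 1 / (2 * K)), Real.sqrt_pos.2 hD, Real.sq_sqrt hD.le⟩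
    have h3 : K ^ 2 * (1 / (2 * K)) ^ 2 = 1 / 4 := by field_simp; norm_num
    have h4 : 2 * K * (1 / (2 * K)) = 1 := by field_simp
    refine ⟨⟨1 / (2 * K), s⟩, ⟨1 / (2 * K), -s⟩, ?_, ?_⟩
    · intro h
      have h1 : s = -s := congrArg Complex.im h
      linarith
    · ext ⟨x, y⟩
      simp only [Set.mem_ofPred_eq, Hzero_eq_self_iff, Set.mem_insert_iff, Set.mem_singleton_iff,
        Complex.mk.injEq]
      rw [← and_or_left, ← sq_eq_sq_iff_eq_or_eq_neg, hs2]
      constructor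
      · rintro ⟨h1, h2⟩
        have hy : y ≠ 0 := by
          rintro rfl
          -- Completing the square: a real root of `K²x² - x + c` would force `4K²c ≤ 1`.
          have h5 : 1 < c * (4 * K ^ 2) := (div_lt_iff₀ (by positivity)).1 hc
          have h6 : (2 * K ^ 2 * x - 1) ^ 2 = 1 - c * (4 * K ^ 2) := by
            linear_combination 4 * K ^ 2 * h1
          nlinarith [sq_nonneg (2 * K ^ 2 * x - 1)]
        have hx : x = 1 / (2 * K) := by
          rw [eq_div_iff (by positivity)]
          exact mul_right_cancel₀ hy (by linear_combination h2)
        subst hx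
        exact ⟨rfl, by linarith⟩
      · rintro ⟨rfl, h⟩
        exact ⟨by linarith, by rw [h4, one_mul]⟩
end

section
/- Let K > 1, x, y ∈ ℝ, and let λ ∈ {1, −1}. Then λ is an eigenvalue of the real 2×2 matrix A_K(x,y) = [[2K²x, −2y],[2Ky, 2Kx]] if and only if (x − λ(K+1)/(4K²))² / ((K−1)/(4K²))² + y² / ((K−1)/(4K))² = 1, i.e. (x,y) lies on the ellipse E_K^{λ} with center (λ(K+1)/(4K²), 0), horizontal semi-axis (K−1)/(4K²) and vertical semi-axis (K−1)/(4K). -/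
/-!
The number `lam` is an eigenvalue of `A` exactly when `det (A - lam • 1) = 0`. Since `lam ^ 2 = 1`,
completing the square in `x` shows that the difference of the two sides of the ellipse equation is
`4 * K / (K - 1) ^ 2` times this determinant, and the factor is nonzero because `K > 1`.
-/

theorem eigenvalue_pm_one_iff_on_ellipse (K x y : ℝ) (hK : 1 < K)
    (lam : ℝ) (hlam : lam = 1 ∨ lam = -1)
    (A : Matrix (Fin 2) (Fin 2) ℝ)
    (hA : A = !![2 * K ^ 2 * x, -2 * y; 2 * K * y, 2 * K * x]) :
    (∃ v : Fin 2 → ℝ, v ≠ 0 ∧ A.mulVec v = lam • v) ↔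
      (x - lam * (K + 1) / (4 * K ^ 2)) ^ 2 / ((K - 1) / (4 * K ^ 2)) ^ 2 +
          y ^ 2 / ((K - 1) / (4 * K)) ^ 2 = 1 := by
  have hK0 : K ≠ 0 := by linarith
  have hK1 : K - 1 ≠ 0 := by linarith
  have hdet : (A - lam • (1 : Matrix (Fin 2) (Fin 2) ℝ)).det =
      (2 * K ^ 2 * x - lam) * (2 * K * x - lam) + 4 * K * y ^ 2 := by
    subst hA
    simp [Matrix.det_fin_two]
    ring
  have hellipse : (x - lam * (K + 1) / (4 * K ^ 2)) ^ 2 / ((K - 1) / (4 * K ^ 2)) ^ 2 +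
      y ^ 2 / ((K - 1) / (4 * K)) ^ 2 - 1 =
      4 * K / (K - 1) ^ 2 *
        ((2 * K ^ 2 * x - lam) * (2 * K * x - lam) + 4 * K * y ^ 2) := by
    rcases hlam with rfl | rfl <;> field_simp <;> ring
  have hc : 4 * K / (K - 1) ^ 2 ≠ 0 := by positivity
  have heig : (∃ v : Fin 2 → ℝ, v ≠ 0 ∧ A.mulVec v = lam • v) ↔
      (A - lam • (1 : Matrix (Fin 2) (Fin 2) ℝ)).det = 0 := by
    rw [← Matrix.exists_mulVec_eq_zero_iff]
    simp only [Matrix.sub_mulVec, Matrix.smul_mulVec, Matrix.one_mulVec, sub_eq_zero]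
  rw [heig, hdet, ← sub_eq_zero (b := (1 : ℝ)), hellipse, mul_eq_zero, or_iff_right hc]
end

section
/- Let K > 1. The system of equations (x − (K+1)/(4K²))² / ((K−1)/(4K²))² + y² / ((K−1)/(4K))² = 1 and y = (√K·(K−1)/2)·x in real variables (x, y) has the unique solution x = 1/(K(K+1)), y = (K−1)/(2√K·(K+1)). Moreover, this point also satisfies 4K³x² + 4Ky² = 1. -/
/-!
The line is tangent to the ellipse: substituting `y = (√K (K - 1) / 2) x` into the left-hand side
of the ellipse equation and using `(K - 1)² + 4K = (K + 1)²`, the difference of the two sides is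
`4K (K (K + 1) x - 1)² / (K - 1)²`, a perfect square up to a nonzero factor. Its double root
`x = 1 / (K (K + 1))` is the only solution, and it lies on `γ_K` because the equation of that ellipse reduces to
`(4K + (K - 1)²) / (K + 1)² = 1`.
-/

theorem ellipse_line_intersection (K : ℝ) (hK : 1 < K) :
    (∀ x y : ℝ,
      ((x - (K + 1) / (4 * K ^ 2)) ^ 2 / ((K - 1) / (4 * K ^ 2)) ^ 2 +
            y ^ 2 / ((K - 1) / (4 * K)) ^ 2 = 1 ∧
          y = (Real.sqrt K * (K - 1) / 2) * x) ↔
        (x = 1 / (K * (K + 1)) ∧ y = (K - 1) / (2 * Real.sqrt K * (K + 1)))) ∧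
    4 * K ^ 3 * (1 / (K * (K + 1))) ^ 2 +
        4 * K * ((K - 1) / (2 * Real.sqrt K * (K + 1))) ^ 2 = 1 := by
  have hK0 : K ≠ 0 := by linarith
  have hK1 : K - 1 ≠ 0 := by linarith
  have hK2 : K + 1 ≠ 0 := by linarith
  have hs : Real.sqrt K ^ 2 = K := Real.sq_sqrt (by linarith)
  have hs0 : Real.sqrt K ≠ 0 := (Real.sqrt_pos.mpr (by linarith)).ne'
  generalize Real.sqrt K = s at hs hs0
  have hy : (s * (K - 1) / 2) * (1 / (K * (K + 1))) = (K - 1) / (2 * s * (K + 1)) := by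
    field_simp
    exact hs
  have tangency : ∀ x : ℝ,
      (x - (K + 1) / (4 * K ^ 2)) ^ 2 / ((K - 1) / (4 * K ^ 2)) ^ 2 +
        ((s * (K - 1) / 2) * x) ^ 2 / ((K - 1) / (4 * K)) ^ 2 - 1 =
      4 * K * (K * (K + 1) * x - 1) ^ 2 / (K - 1) ^ 2 := by
    intro x
    have e : ((s * (K - 1) / 2) * x) ^ 2 = K * (K - 1) ^ 2 / 4 * x ^ 2 := by
      linear_combination ((K - 1) ^ 2 / 4 * x ^ 2) * hs
    rw [e]
    field_simp
    ring
  refine ⟨fun x y => ⟨?_, ?_⟩, ?_⟩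
  · rintro ⟨h, rfl⟩
    have h0 : 4 * K * (K * (K + 1) * x - 1) ^ 2 / (K - 1) ^ 2 = 0 := by
      rw [← tangency, h, sub_self]
    have h1 : K * (K + 1) * x - 1 = 0 := by simpa [hK0, hK1] using h0
    have hx : x = 1 / (K * (K + 1)) := by
      field_simp
      linarith
    exact ⟨hx, by rw [hx, hy]⟩
  · rintro ⟨hx, rfl⟩
    rw [← hy, ← hx]
    refine ⟨sub_eq_zero.mp ?_, rfl⟩
    have h1 : K * (K + 1) * x - 1 = 0 := by
      rw [hx]
      field_simp
      ring
    rw [tangency, h1]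
    simp
  · have e : ((K - 1) / (2 * s * (K + 1))) ^ 2 = (K - 1) ^ 2 / (4 * K * (K + 1) ^ 2) := by
      rw [div_pow, mul_pow, mul_pow, hs]
      norm_num
    rw [e]
    field_simp
    ring
end
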